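/- Let r ≥ 2 and d ≥ 1 be integers. For any n = (n_1, …, n_r) ∈ ℤ_{≥0}^r, there exists a probability measure ρ_n on the finite set Δ_{n_1}^{(d)} × ⋯ × Δ_{n_r}^{(d)} such that the pushforward of ρ_n under each of the r coordinate projections onto Δ_{n_i}^{(d)} is the uniform (equidistributed) probability measure on Δ_{n_i}^{(d)}, and the pushforward of ρ_n under the addition map (α_1, …, α_r) ↦ α_1 + ⋯ + α_r (addition in ℤ^d) is the uniform probability measure on Δ_{n_1 + ⋯ + n_r}^{(d)}. -/

import Mathlib

open scoped ENNReal

/-- `Δ_n^{(d)} = {(a₁, …, a_d) ∈ ℤ_{≥0}^d : a₁ + ⋯ + a_d = n}` is a finite set. -/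
instance fintypeDelta (d n : ℕ) : Fintype {a : Fin d → ℕ // ∑ j, a j = n} :=
  Fintype.subtype (Finset.Nat.antidiagonalTuple d n)
    (fun _ => Finset.Nat.mem_antidiagonalTuple)

open scoped NNReal Nat

namespace Stmt13

/-- the monomial `X^a` -/
noncomputable def mon {d : ℕ} (a : Fin d → ℕ) : MvPolynomial (Fin d) ℝ≥0 :=
  ∏ j, MvPolynomial.X j ^ a j

lemma mon_eq {d : ℕ} (a : Fin d → ℕ) :
    mon a = MvPolynomial.monomial (Finsupp.equivFunOnFinite.symm a) 1 := by
  rw [MvPolynomial.monomial_eq, mon, Finsupp.prod_fintype _ _ (by simp)]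
  simp

/-- the functional `X^a ↦ f a` -/
noncomputable def L {d : ℕ} (f : (Fin d → ℕ) → ℝ≥0) : MvPolynomial (Fin d) ℝ≥0 →ₗ[ℝ≥0] ℝ≥0 :=
  (MvPolynomial.basisMonomials (Fin d) ℝ≥0).constr ℝ≥0 (fun s => f s)

lemma L_mon {d : ℕ} (f : (Fin d → ℕ) → ℝ≥0) (a : Fin d → ℕ) : L f (mon a) = f a := by
  have := (MvPolynomial.basisMonomials (Fin d) ℝ≥0).constr_basis ℝ≥0
    (fun s => f s) (Finsupp.equivFunOnFinite.symm a)
  rw [MvPolynomial.coe_basisMonomials] at this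
  rw [mon_eq, L, this]
  rfl

/-- sum of the variables -/
noncomputable def S (d : ℕ) : MvPolynomial (Fin d) ℝ≥0 := ∑ j, MvPolynomial.X j

/-- multinomial coefficient -/
noncomputable def M {d : ℕ} (a : Fin d → ℕ) : ℝ≥0 := (Nat.multinomial Finset.univ a : ℝ≥0)

/-- product of factorials -/
noncomputable def P {d : ℕ} (a : Fin d → ℕ) : ℝ≥0 := ∏ j, ((a j)! : ℝ≥0)

lemma P_ne {d : ℕ} (a : Fin d → ℕ) : P a ≠ 0 := by
  unfold P
  exact Finset.prod_ne_zero_iff.2 fun j _ => by exact_mod_cast (a j).factorial_ne_zero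

lemma M_mul_P {d : ℕ} (a : Fin d → ℕ) : M a * P a = ((∑ j, a j)! : ℝ≥0) := by
  rw [mul_comm, M, P, ← Nat.multinomial_spec Finset.univ a]
  push_cast
  rfl

lemma S_pow (d n : ℕ) : S d ^ n = ∑ y : {a : Fin d → ℕ // ∑ j, a j = n}, M y.1 • mon y.1 := by
  rw [S, Finset.sum_pow_eq_sum_piAntidiag]
  rw [Finset.sum_subtype (p := fun a : Fin d → ℕ => ∑ j, a j = n) (F := fintypeDelta d n) _ (by simp)]
  refine Finset.sum_congr rfl fun y _ => ?_
  rw [mon, M, MvPolynomial.smul_eq_C_mul]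
  simp

lemma mon_mul_X {d : ℕ} (a : Fin d → ℕ) (j : Fin d) :
    mon a * MvPolynomial.X j = mon (a + Pi.single j 1) := by
  unfold mon
  simp only [Pi.add_apply, pow_add, Finset.prod_mul_distrib]
  congr 1
  rw [Finset.prod_eq_single j]
  · simp
  · intro b _ hb
    simp [hb]
  · simp

lemma P_add {d : ℕ} (a : Fin d → ℕ) (j : Fin d) :
    P (a + Pi.single j 1) = (a j + 1) * P a := by
  unfold P
  rw [← Finset.mul_prod_erase _ _ (Finset.mem_univ j),
    ← Finset.mul_prod_erase _ (fun j => ((a j)! : ℝ≥0)) (Finset.mem_univ j), ← mul_assoc]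
  congr 1
  · simp [Nat.factorial_succ]
  · refine Finset.prod_congr rfl fun k hk => ?_
    simp [Finset.ne_of_mem_erase hk]

lemma L_P {d : ℕ} (m : ℕ) : ∀ a : Fin d → ℕ,
    L P (mon a * S d ^ m) = P a * ((∑ j, a j + d).ascFactorial m : ℝ≥0) := by
  induction m with
  | zero => intro a; simp [L_mon]
  | succ m ih =>
    intro a
    have h : mon a * S d ^ (m+1) = ∑ j, mon (a + Pi.single j 1) * S d ^ m := by
      rw [pow_succ', ← mul_assoc]
      conv_lhs => rw [show mon a * S d = ∑ j, mon (a + Pi.single j 1) by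
        simp only [← mon_mul_X]; rw [S, Finset.mul_sum]]
      rw [Finset.sum_mul]
    rw [h, map_sum]
    simp only [ih, P_add]
    have hs : ∀ j : Fin d, ∑ k, (a + Pi.single j 1 : Fin d → ℕ) k = ∑ k, a k + 1 := by
      intro j
      simp [Finset.sum_add_distrib]
    simp only [hs]
    rw [← Finset.sum_mul, ← Finset.sum_mul, Finset.sum_add_distrib]
    have := Nat.succ_ascFactorial (∑ j, a j + d) m
    rw [Nat.ascFactorial_succ, ← this, add_right_comm]
    push_cast
    simp
    ring

lemma card_mul (d n : ℕ) :
    (Fintype.card {a : Fin d → ℕ // ∑ j, a j = n} : ℝ≥0) * (n ! : ℝ≥0)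
      = (d.ascFactorial n : ℝ≥0) := by
  have h := L_P (d := d) n 0
  have h0 : mon (0 : Fin d → ℕ) = 1 := by simp [mon]
  rw [h0, one_mul, S_pow, map_sum] at h
  simp only [map_smul, L_mon, smul_eq_mul, M_mul_P] at h
  rw [Finset.sum_congr rfl (fun y _ => by rw [y.2])] at h
  simpa [P] using h

lemma sum_gen {r d : ℕ} (n : Fin r → ℕ) (g : Fin r → (Fin d → ℕ) → ℝ≥0)
    (f : (Fin d → ℕ) → ℝ≥0) :
    ∑ x : (∀ i : Fin r, {a : Fin d → ℕ // ∑ j, a j = n i}),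
      (∏ i, g i (x i).1) * f (fun j => ∑ i, (x i).1 j)
    = L f (∏ i, ∑ y : {a : Fin d → ℕ // ∑ j, a j = n i}, g i y.1 • mon y.1) := by
  rw [Finset.prod_univ_sum, map_sum, Fintype.piFinset_univ]
  refine Finset.sum_congr rfl fun x _ => ?_
  rw [Finset.prod_smul, map_smul, smul_eq_mul]
  congr 1
  have : ∏ i, mon (x i).1 = mon (fun j => ∑ i, (x i).1 j) := by
    unfold mon
    rw [Finset.prod_comm]
    exact Finset.prod_congr rfl fun j _ => Finset.prod_pow_eq_pow_sum _ _ _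
  rw [this, L_mon]

/-- the weight -/
noncomputable def w {r d : ℕ} (n : Fin r → ℕ)
    (x : ∀ i : Fin r, {a : Fin d → ℕ // ∑ j, a j = n i}) : ℝ≥0 :=
  (∏ i, M (x i).1) * P (fun j => ∑ i, (x i).1 j) * (d.ascFactorial (∑ i, n i) : ℝ≥0)⁻¹

lemma asc_ne {d : ℕ} (hd : 1 ≤ d) (n : ℕ) : (d.ascFactorial n : ℝ≥0) ≠ 0 := by
  obtain ⟨k, rfl⟩ : ∃ k, d = k + 1 := ⟨d - 1, by omega⟩
  exact_mod_cast (Nat.ascFactorial_pos k n).ne'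

lemma card_inv {d : ℕ} (hd : 1 ≤ d) (n : ℕ) :
    (Fintype.card {a : Fin d → ℕ // ∑ j, a j = n} : ℝ≥0)⁻¹
      = (n ! : ℝ≥0) * (d.ascFactorial n : ℝ≥0)⁻¹ := by
  have h := card_mul d n
  have h1 := asc_ne hd n
  have h2 : (n ! : ℝ≥0) ≠ 0 := by exact_mod_cast n.factorial_ne_zero
  rw [← h, mul_inv, mul_comm, mul_assoc, inv_mul_cancel₀ h2, mul_one]

lemma sum_add_marg {r d : ℕ} (hd : 1 ≤ d) (n : Fin r → ℕ) (γ : Fin d → ℕ)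
    (hγ : ∑ j, γ j = ∑ i, n i) :
    ∑ x : (∀ i : Fin r, {a : Fin d → ℕ // ∑ j, a j = n i}),
      (if γ = (fun j => ∑ i, (x i).1 j) then w n x else 0)
    = (Fintype.card {a : Fin d → ℕ // ∑ j, a j = ∑ i, n i} : ℝ≥0)⁻¹ := by
  have h := sum_gen n (fun _ => M) (fun b => if γ = b then P b else 0)
  simp only [← S_pow] at h
  rw [Finset.prod_pow_eq_pow_sum, S_pow, map_sum] at h
  simp only [map_smul, L_mon, smul_eq_mul] at h
  rw [Finset.sum_eq_single (⟨γ, hγ⟩ : {a : Fin d → ℕ // ∑ j, a j = ∑ i, n i})] at h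
  · simp only [if_true, M_mul_P, hγ] at h
    rw [card_inv hd, ← h, Finset.sum_mul]
    refine Finset.sum_congr rfl fun x _ => ?_
    split_ifs <;> simp [w]
  · intro b _ hb
    rw [if_neg, mul_zero]
    intro hh
    exact hb (Subtype.ext hh.symm)
  · simp

lemma sum_proj_marg {r d : ℕ} (hd : 1 ≤ d) (n : Fin r → ℕ) (i : Fin r)
    (α : {a : Fin d → ℕ // ∑ j, a j = n i}) :
    ∑ x : (∀ i : Fin r, {a : Fin d → ℕ // ∑ j, a j = n i}),
      (if α = x i then w n x else 0)
    = (Fintype.card {a : Fin d → ℕ // ∑ j, a j = n i} : ℝ≥0)⁻¹ := by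
  have h := sum_gen n (fun k b => if k = i → α.1 = b then M b else 0) P
  rw [← Finset.mul_prod_erase _ _ (Finset.mem_univ i)] at h
  have h1 : ∑ y : {a : Fin d → ℕ // ∑ j, a j = n i},
      (if i = i → α.1 = y.1 then M y.1 else 0) • mon y.1 = M α.1 • mon α.1 := by
    rw [Finset.sum_eq_single α]
    · simp
    · intro b _ hb
      rw [if_neg, zero_smul]
      intro hh
      exact hb (Subtype.ext (hh rfl).symm)
    · simp
  have h2 : ∏ k ∈ Finset.univ.erase i, ∑ y : {a : Fin d → ℕ // ∑ j, a j = n k},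
      (if k = i → α.1 = y.1 then M y.1 else 0) • mon y.1
      = S d ^ (∑ k ∈ Finset.univ.erase i, n k) := by
    rw [← Finset.prod_pow_eq_pow_sum]
    refine Finset.prod_congr rfl fun k hk => ?_
    rw [S_pow]
    have := Finset.ne_of_mem_erase hk
    simp [this]
  rw [h1, h2, smul_mul_assoc, map_smul, L_P, smul_eq_mul, ← mul_assoc, M_mul_P, α.2] at h
  have hN := Finset.add_sum_erase Finset.univ n (Finset.mem_univ i)
  have h3 := Nat.ascFactorial_mul_ascFactorial d (n i) (∑ k ∈ Finset.univ.erase i, n k)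
  rw [hN] at h3
  have h4 := asc_ne hd (∑ i, n i)
  have h5 := asc_ne hd (n i)
  have h6 : ((n i + d).ascFactorial (∑ k ∈ Finset.univ.erase i, n k) : ℝ≥0)
      * (d.ascFactorial (∑ i, n i) : ℝ≥0)⁻¹ = (d.ascFactorial (n i) : ℝ≥0)⁻¹ := by
    rw [add_comm (n i) d]
    have h3' := congrArg (Nat.cast (R := ℝ≥0)) h3
    push_cast at h3'
    field_simp
    rw [← h3']
    ring
  rw [card_inv hd, ← h6, ← mul_assoc, ← h, Finset.sum_mul]
  refine Finset.sum_congr rfl fun x _ => ?_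
  by_cases hx : α = x i
  · have : ∀ k, k = i → α.1 = (x k).1 := by rintro k rfl; rw [hx]
    simp only [if_pos hx, w]
    congr 2
    exact Finset.prod_congr rfl fun k _ => (if_pos (this k)).symm
  · rw [if_neg hx, Finset.prod_eq_zero (Finset.mem_univ i)]
    · simp
    · rw [if_neg]
      intro hh
      exact hx (Subtype.ext (hh rfl))

lemma card_ne {d : ℕ} (hd : 1 ≤ d) (n : ℕ) :
    (Fintype.card {a : Fin d → ℕ // ∑ j, a j = n} : ℝ≥0) ≠ 0 := by
  intro h
  have := card_mul d n
  rw [h, zero_mul] at this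
  exact asc_ne hd n this.symm

lemma w_sum {r d : ℕ} (hr : 0 < r) (hd : 1 ≤ d) (n : Fin r → ℕ) :
    ∑ x : (∀ i : Fin r, {a : Fin d → ℕ // ∑ j, a j = n i}), w n x = 1 := by
  have h := fun α => sum_proj_marg hd n ⟨0, hr⟩ α
  have h2 := Finset.sum_congr rfl
    (fun α (_ : α ∈ (Finset.univ : Finset {a : Fin d → ℕ // ∑ j, a j = n ⟨0, hr⟩})) => h α)
  rw [Finset.sum_comm] at h2
  simpa [card_ne hd] using h2

end Stmt13

open Stmt13 in
theorem stmt_13 (r d : ℕ) (hr : 2 ≤ r) (hd : 1 ≤ d) (n : Fin r → ℕ) :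
    ∃ ρ : PMF (∀ i : Fin r, {a : Fin d → ℕ // ∑ j, a j = n i}),
      -- the pushforward under each coordinate projection is uniform
      (∀ i : Fin r, ∀ α : {a : Fin d → ℕ // ∑ j, a j = n i},
        (ρ.map fun x => x i) α
          = (Fintype.card {a : Fin d → ℕ // ∑ j, a j = n i} : ℝ≥0∞)⁻¹) ∧
      -- the pushforward under the addition map is uniform
      (∀ γ : {a : Fin d → ℕ // ∑ j, a j = ∑ i, n i},
        (ρ.map fun x =>
          (⟨fun j => ∑ i, (x i).1 j, by
              rw [Finset.sum_comm]
              exact Finset.sum_congr rfl fun i _ => (x i).2⟩ :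
            {a : Fin d → ℕ // ∑ j, a j = ∑ i, n i})) γ
          = (Fintype.card {a : Fin d → ℕ // ∑ j, a j = ∑ i, n i} : ℝ≥0∞)⁻¹) := by
  refine ⟨PMF.ofFintype (fun x => (w n x : ℝ≥0∞)) ?_, ?_, ?_⟩
  · have := w_sum (by omega) hd n
    exact_mod_cast this
  · intro i α
    have h := congrArg ((↑) : ℝ≥0 → ℝ≥0∞) (sum_proj_marg hd n i α)
    rw [ENNReal.coe_inv (card_ne hd _), ENNReal.coe_natCast] at h
    rw [PMF.map_apply, tsum_fintype, ← h]
    push_cast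
    refine Finset.sum_congr rfl fun x _ => ?_
    simp only [PMF.ofFintype_apply]
    split_ifs <;> simp
  · intro γ
    have h := congrArg ((↑) : ℝ≥0 → ℝ≥0∞) (sum_add_marg hd n γ.1 γ.2)
    rw [ENNReal.coe_inv (card_ne hd _), ENNReal.coe_natCast] at h
    rw [PMF.map_apply, tsum_fintype, ← h]
    push_cast
    refine Finset.sum_congr rfl fun x _ => ?_
    simp only [PMF.ofFintype_apply, Subtype.ext_iff]
    split_ifs <;> simp
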